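/- arXiv:1411.6749 — 3 statements merged into one kernel-verified Lean document; each statement's English description precedes it below -/
import Mathlib

section
/- Let R > 0 and let 0 ≤ γ ≤ 2R. The area (two-dimensional Lebesgue measure) of the intersection of two closed discs in the plane, each of radius R, whose centers are at distance γ from each other, equals A_s(γ) = 2R² arccos(γ/(2R)) − γ·√(R² − γ²/4). -/
open MeasureTheory Metric

/-!
The perpendicular bisector of the centers cuts the lens into two congruent circular segments,
each at distance `d = γ / 2` from the center of its disc, and is itself a null set. Slicing a
segment parallel to its chord gives the area `2 ∫ x in d..R, √(R² - x²)`, which an explicit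
antiderivative evaluates to `R² arccos (d / R) - d √(R² - d²)`. For coinciding centers there is no
bisector, and the lens is a full disc.
-/

open Module RealInnerProductSpace

lemma hasDerivAt_sq_mul_arccos_sub {R x : ℝ} (hR : 0 < R) (hx : x ∈ Set.Ioo (-R) R) :
    HasDerivAt (fun x ↦ R ^ 2 * Real.arccos (x / R) - x * √(R ^ 2 - x ^ 2))
      (-2 * √(R ^ 2 - x ^ 2)) x := by
  have hpos : 0 < R ^ 2 - x ^ 2 := sub_pos.mpr (sq_lt_sq' hx.1 hx.2)
  have hne_neg_one : x / R ≠ -1 := ((lt_div_iff₀ hR).mpr (by linarith [hx.1])).ne'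
  have hne_one : x / R ≠ 1 := ((div_lt_one hR).mpr hx.2).ne
  have hsqrt : HasDerivAt (fun x ↦ √(R ^ 2 - x ^ 2)) (-(2 * x) / (2 * √(R ^ 2 - x ^ 2))) x := by
    simpa using (((hasDerivAt_id x).pow 2).const_sub (R ^ 2)).sqrt hpos.ne'
  have harccos := (Real.hasDerivAt_arccos hne_neg_one hne_one).comp x
    ((hasDerivAt_id x).div_const R)
  refine ((harccos.const_mul (R ^ 2)).sub ((hasDerivAt_id x).mul hsqrt)).congr_deriv ?_
  have hscale : √(1 - (x / R) ^ 2) = √(R ^ 2 - x ^ 2) / R := by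
    rw [show 1 - (x / R) ^ 2 = (R ^ 2 - x ^ 2) / R ^ 2 by field_simp, Real.sqrt_div hpos.le,
      Real.sqrt_sq hR.le]
  have hsqrt_ne : √(R ^ 2 - x ^ 2) ≠ 0 := (Real.sqrt_pos.mpr hpos).ne'
  have hsq_sqrt : √(R ^ 2 - x ^ 2) ^ 2 = R ^ 2 - x ^ 2 := Real.sq_sqrt hpos.le
  simp only [id, hscale]
  field_simp [hsqrt_ne]
  linear_combination hsq_sqrt

lemma integral_two_mul_sqrt_sq_sub_sq {R d : ℝ} (hR : 0 < R) (hd : d ∈ Set.Icc (-R) R) :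
    ∫ x in d..R, 2 * √(R ^ 2 - x ^ 2) =
      R ^ 2 * Real.arccos (d / R) - d * √(R ^ 2 - d ^ 2) := by
  rw [intervalIntegral.integral_eq_sub_of_hasDerivAt_of_le hd.2
    (f := fun x ↦ -(R ^ 2 * Real.arccos (x / R) - x * √(R ^ 2 - x ^ 2)))]
  · simp [hR.ne']
  · fun_prop
  · intro x hx
    simpa using (hasDerivAt_sq_mul_arccos_sub hR ⟨hd.1.trans_lt hx.1, hx.2⟩).fun_neg
  · exact Continuous.intervalIntegrable (by fun_prop) d R

lemma volume_setOf_sq_le (a : ℝ) : volume {y : ℝ | y ^ 2 ≤ a} = ENNReal.ofReal (2 * √a) := by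
  rcases lt_or_ge a 0 with ha | ha
  · have hempty : {y : ℝ | y ^ 2 ≤ a} = ∅ :=
      Set.eq_empty_of_forall_notMem fun y hy ↦ (ha.trans_le (sq_nonneg y)).not_ge hy
    simp [hempty, Real.sqrt_eq_zero_of_nonpos ha.le]
  · have hIcc : {y : ℝ | y ^ 2 ≤ a} = Set.Icc (-√a) √a := Set.ext fun y ↦ Real.sq_le ha
    rw [hIcc, Real.volume_Icc, sub_neg_eq_add, two_mul]

lemma measurableSet_setOf_sq_add_sq_le_and_le_fst (R d : ℝ) :
    MeasurableSet {p : ℝ × ℝ | p.1 ^ 2 + p.2 ^ 2 ≤ R ^ 2 ∧ d ≤ p.1} := by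
  measurability

lemma volume_setOf_sq_add_sq_le_and_le_fst {R d : ℝ} (hR : 0 ≤ R) (hd : d ≤ R) :
    volume {p : ℝ × ℝ | p.1 ^ 2 + p.2 ^ 2 ≤ R ^ 2 ∧ d ≤ p.1} =
      ENNReal.ofReal (∫ x in d..R, 2 * √(R ^ 2 - x ^ 2)) := by
  have hslice (x : ℝ) :
      volume (Prod.mk x ⁻¹' {p : ℝ × ℝ | p.1 ^ 2 + p.2 ^ 2 ≤ R ^ 2 ∧ d ≤ p.1}) =
        (Set.Icc d R).indicator (fun x ↦ ENNReal.ofReal (2 * √(R ^ 2 - x ^ 2))) x := by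
    by_cases hx : x ∈ Set.Icc d R
    · rw [Set.indicator_of_mem hx, ← volume_setOf_sq_le]
      simp [hx.1, le_sub_iff_add_le']
    · rw [Set.indicator_of_notMem hx]
      refine measure_mono_null (t := ∅) (fun y ⟨hdisc, hdx⟩ ↦ hx ⟨hdx, ?_⟩) measure_empty
      exact (abs_le_of_sq_le_sq' ((le_add_of_nonneg_right (sq_nonneg y)).trans hdisc) hR).2
  rw [Measure.volume_eq_prod, Measure.prod_apply (measurableSet_setOf_sq_add_sq_le_and_le_fst R d),
    lintegral_congr hslice, lintegral_indicator measurableSet_Icc,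
    intervalIntegral.integral_of_le hd, ← integral_Icc_eq_integral_Ioc,
    ofReal_integral_eq_lintegral_ofReal (Continuous.integrableOn_Icc (by fun_prop))
      (.of_forall fun x ↦ by positivity)]

lemma exists_orthonormalBasis_apply_eq {𝕜 E ι : Type*} [RCLike 𝕜] [NormedAddCommGroup E]
    [InnerProductSpace 𝕜 E] [Fintype ι]
    (hE : finrank 𝕜 E = Fintype.card ι) (i : ι) {u : E} (hu : ‖u‖ = 1) :
    ∃ b : OrthonormalBasis ι 𝕜 E, b i = u := by
  have horth : Orthonormal 𝕜 (({i} : Set ι).domRestrict fun _ ↦ u) :=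
    ⟨fun _ ↦ hu, fun j k hjk ↦ absurd (Subsingleton.elim j k) hjk⟩
  have : FiniteDimensional 𝕜 E :=
    .of_finrank_pos (hE ▸ Fintype.card_pos_iff.mpr ⟨i⟩)
  obtain ⟨b, hb⟩ := horth.exists_orthonormalBasis_extension_of_card_eq hE
  exact ⟨b, hb i rfl⟩

section InnerProductSpace

variable {E : Type*} [NormedAddCommGroup E] [InnerProductSpace ℝ E]

/-- The part of the closed disc of center `c` and radius `R` cut off by the line at signed distance
`d` from `c` in the direction `u`. The vector `u` is meant to have norm one, and `d < 0` gives the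
larger of the two parts. -/
def circularSegment (c u : E) (R d : ℝ) : Set E :=
  closedBall c R ∩ {x | d ≤ ⟪u, x - c⟫}

lemma isClosed_circularSegment (c u : E) (R d : ℝ) : IsClosed (circularSegment c u R d) :=
  isClosed_closedBall.inter (isClosed_le continuous_const (by fun_prop))

lemma dist_le_dist_iff_le_inner (c₁ c₂ x : E) :
    dist x c₂ ≤ dist x c₁ ↔ dist c₁ c₂ ^ 2 / 2 ≤ ⟪c₂ - c₁, x - c₁⟫ := by
  have hexpand : dist x c₂ ^ 2 = dist x c₁ ^ 2 - 2 * ⟪c₂ - c₁, x - c₁⟫ + dist c₁ c₂ ^ 2 := by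
    rw [dist_eq_norm, dist_eq_norm, dist_comm, dist_eq_norm, real_inner_comm, ← norm_sub_sq_real,
      sub_sub_sub_cancel_right]
  rw [← sq_le_sq₀ dist_nonneg dist_nonneg, hexpand]
  constructor <;> intro h <;> linarith

lemma mem_circularSegment_normalize_iff {c₁ c₂ : E} (hc : c₁ ≠ c₂) {R : ℝ} {x : E} :
    x ∈ circularSegment c₁ (NormedSpace.normalize (c₂ - c₁)) R (dist c₁ c₂ / 2) ↔
      dist x c₁ ≤ R ∧ dist x c₂ ≤ dist x c₁ := by
  have hpos : 0 < dist c₁ c₂ := dist_pos.mpr hc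
  have hinner : ⟪c₂ - c₁, x - c₁⟫ =
      dist c₁ c₂ * ⟪NormedSpace.normalize (c₂ - c₁), x - c₁⟫ := by
    rw [dist_comm, dist_eq_norm, ← real_inner_smul_left, NormedSpace.norm_smul_normalize]
  rw [dist_le_dist_iff_le_inner, hinner, sq, mul_div_assoc, mul_le_mul_iff_right₀ hpos]
  rfl

lemma closedBall_inter_closedBall_eq_union {c₁ c₂ : E} (hc : c₁ ≠ c₂) (R : ℝ) :
    closedBall c₁ R ∩ closedBall c₂ R =
      circularSegment c₁ (NormedSpace.normalize (c₂ - c₁)) R (dist c₁ c₂ / 2) ∪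
        circularSegment c₂ (NormedSpace.normalize (c₁ - c₂)) R (dist c₂ c₁ / 2) := by
  ext x
  rw [Set.mem_union, mem_circularSegment_normalize_iff hc,
    mem_circularSegment_normalize_iff hc.symm, Set.mem_inter_iff, mem_closedBall, mem_closedBall]
  grind

variable [FiniteDimensional ℝ E] [MeasurableSpace E] [BorelSpace E]

lemma aedisjoint_circularSegment {c₁ c₂ : E} (hc : c₁ ≠ c₂) (R : ℝ) :
    AEDisjoint volume
      (circularSegment c₁ (NormedSpace.normalize (c₂ - c₁)) R (dist c₁ c₂ / 2))
      (circularSegment c₂ (NormedSpace.normalize (c₁ - c₂)) R (dist c₂ c₁ / 2)) := by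
  refine measure_mono_null (fun x hx ↦ ?_) (Measure.addHaar_affineSubspace volume
    (AffineSubspace.perpBisector c₁ c₂) (AffineSubspace.perpBisector_eq_top.not.mpr hc))
  rw [Set.mem_inter_iff, mem_circularSegment_normalize_iff hc,
    mem_circularSegment_normalize_iff hc.symm] at hx
  exact AffineSubspace.mem_perpBisector_iff_dist_eq.mpr (hx.2.2.antisymm hx.1.2)

lemma exists_measurePreserving_prod (hE : finrank ℝ E = 2) {u : E} (hu : ‖u‖ = 1) :
    ∃ f : E → ℝ × ℝ, MeasurePreserving f ∧
      ∀ x, (f x).1 = ⟪u, x⟫ ∧ (f x).1 ^ 2 + (f x).2 ^ 2 = ‖x‖ ^ 2 := by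
  obtain ⟨b, rfl⟩ := exists_orthonormalBasis_apply_eq (𝕜 := ℝ) (ι := Fin 2)
    (by simpa using hE) 0 hu
  refine ⟨fun x ↦ (b.repr x 0, b.repr x 1), ?_, fun x ↦ ⟨b.repr_apply_apply x 0, ?_⟩⟩
  · exact (volume_preserving_finTwoArrow ℝ).comp
      ((EuclideanSpace.volume_preserving_symm_measurableEquiv_toLp (Fin 2)).comp
        b.measurePreserving_repr)
  · simp only [b.repr_apply_apply, ← b.sum_sq_inner_right x, Fin.sum_univ_two]

lemma volume_circularSegment (hE : finrank ℝ E = 2) (c : E) {u : E} (hu : ‖u‖ = 1) {R d : ℝ}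
    (hR : 0 < R) (hd : d ∈ Set.Icc (-R) R) :
    volume (circularSegment c u R d) =
      ENNReal.ofReal (R ^ 2 * Real.arccos (d / R) - d * √(R ^ 2 - d ^ 2)) := by
  obtain ⟨f, hf, hcoord⟩ := exists_measurePreserving_prod hE hu
  have hpreimage : circularSegment c u R d =
      (fun x ↦ f (x - c)) ⁻¹' {p | p.1 ^ 2 + p.2 ^ 2 ≤ R ^ 2 ∧ d ≤ p.1} := by
    ext x
    rw [Set.mem_preimage, Set.mem_ofPred_eq, (hcoord _).2, (hcoord _).1,
      sq_le_sq₀ (norm_nonneg _) hR.le, ← dist_eq_norm]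
    rfl
  have hmotion : MeasurePreserving (fun x ↦ f (x - c)) :=
    hf.comp (measurePreserving_sub_right volume c)
  rw [hpreimage, hmotion.measure_preimage
      (measurableSet_setOf_sq_add_sq_le_and_le_fst R d).nullMeasurableSet,
    volume_setOf_sq_add_sq_le_and_le_fst hR.le hd.2, integral_two_mul_sqrt_sq_sub_sq hR hd]

lemma volume_closedBall_of_finrank_eq_two (hE : finrank ℝ E = 2) (c : E) {R : ℝ} (hR : 0 ≤ R) :
    volume (closedBall c R) = ENNReal.ofReal (Real.pi * R ^ 2) := by
  have : Nontrivial E := nontrivial_of_finrank_pos (R := ℝ) (by lia)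
  rw [InnerProductSpace.volume_closedBall_of_dim_even (k := 1) (by lia), hE,
    ← ENNReal.ofReal_pow hR, ← ENNReal.ofReal_mul (by positivity)]
  simp [mul_comm]

theorem stmt_2_general (hE : finrank ℝ E = 2) {c₁ c₂ : E} {R : ℝ} (hR : 0 < R)
    (hc : dist c₁ c₂ ≤ 2 * R) :
    volume (closedBall c₁ R ∩ closedBall c₂ R) =
      ENNReal.ofReal (2 * R ^ 2 * Real.arccos (dist c₁ c₂ / (2 * R)) -
        dist c₁ c₂ * √(R ^ 2 - dist c₁ c₂ ^ 2 / 4)) := by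
  rcases eq_or_ne c₁ c₂ with rfl | hne
  · rw [Set.inter_self, volume_closedBall_of_finrank_eq_two hE c₁ hR.le, dist_self, zero_div,
      Real.arccos_zero]
    ring_nf
  · have hd : dist c₁ c₂ / 2 ∈ Set.Icc (-R) R := by
      constructor <;> linarith [dist_nonneg (x := c₁) (y := c₂)]
    rw [closedBall_inter_closedBall_eq_union hne,
      measure_union₀ (isClosed_circularSegment ..).measurableSet.nullMeasurableSet
        (aedisjoint_circularSegment hne R), dist_comm c₂ c₁,
      volume_circularSegment hE c₁ (NormedSpace.norm_normalize (sub_ne_zero.mpr hne.symm)) hR hd,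
      volume_circularSegment hE c₂ (NormedSpace.norm_normalize (sub_ne_zero.mpr hne)) hR hd,
      ← two_mul, ← ENNReal.ofReal_ofNat, ← ENNReal.ofReal_mul zero_le_two, div_div, div_pow]
    ring_nf

end InnerProductSpace

/-- The area of the intersection of two closed discs of radius `R` in the plane
whose centers are at distance `γ`, with `0 ≤ γ ≤ 2R`, equals
`2R² arccos (γ/(2R)) − γ √(R² − γ²/4)`. -/
theorem stmt_2 (R γ : ℝ) (hR : 0 < R) (hγ0 : 0 ≤ γ) (hγ : γ ≤ 2 * R)
    (c₁ c₂ : EuclideanSpace ℝ (Fin 2)) (hd : dist c₁ c₂ = γ) :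
    volume (closedBall c₁ R ∩ closedBall c₂ R) =
      ENNReal.ofReal (2 * R ^ 2 * Real.arccos (γ / (2 * R)) -
        γ * Real.sqrt (R ^ 2 - γ ^ 2 / 4)) := by
  subst hd
  exact stmt_2_general finrank_euclideanSpace_fin hR hγ
end

section
/- Let R > 0 and define A_s(γ) = 2R² arccos(γ/(2R)) − γ·√(R² − γ²/4) for 0 ≤ γ ≤ R. Then ∫₀^R (πR² − A_s(r)) · (2r/R²) dr = (3√3/4)·R². (This is the exact value behind the paper's approximation E[A_{v∖i} | v ∈ N_i] ≈ 1.30 R² in Lemma 2(a): the expected area of the part of a disc of radius R centered at a uniformly random point v of another disc of radius R centered at i that lies outside the disc centered at i, since the distance r = ‖vi‖ has density f(r) = 2r/R² on [0, R].) -/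
/-!
The area `A_s` common to two discs of radius `R` at distance `γ` decreases at the rate
`√((2R)² − γ²)`, the length of the chord joining the two intersection points of the circles.
Integrating `πR² − A_s(r)` by parts against `2r dr = d(r²)` therefore leaves a boundary term,
which involves only `A_s(R) = (2π/3 − √3/2)R²`, and the algebraic integral
`∫₀^R r² √((2R)² − r²) dr = (π/3 − √3/4)R⁴`.
-/

open Real Set

section SemicircleCalculus

variable {a x : ℝ}

lemma sq_sub_sq_pos_of_abs_lt (hx : |x| < a) : 0 < a ^ 2 - x ^ 2 :=
  sub_pos.mpr (sq_lt_sq' (abs_lt.mp hx).1 (abs_lt.mp hx).2)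

lemma abs_lt_abs_of_mem_uIoo_zero {c : ℝ} (hx : x ∈ uIoo 0 c) : |x| < |c| := by
  rcases le_total 0 c with hc | hc
  · rw [uIoo_of_le hc] at hx
    simpa only [abs_of_pos hx.1, abs_of_nonneg hc] using hx.2
  · rw [uIoo_of_ge hc] at hx
    simpa only [abs_of_neg hx.2, abs_of_nonpos hc, neg_lt_neg_iff] using hx.1

lemma hasDerivAt_sqrt_sq_sub_sq (hx : x ^ 2 ≠ a ^ 2) :
    HasDerivAt (fun y ↦ √(a ^ 2 - y ^ 2)) (-x / √(a ^ 2 - x ^ 2)) x := by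
  refine (((hasDerivAt_pow 2 x).const_sub (a ^ 2)).sqrt (sub_ne_zero.mpr hx.symm)).congr_deriv ?_
  norm_num
  ring

lemma hasDerivAt_arcsin_div (hx : |x| < a) :
    HasDerivAt (fun y ↦ arcsin (y / a)) (1 / √(a ^ 2 - x ^ 2)) x := by
  have ha : 0 < a := (abs_nonneg x).trans_lt hx
  obtain ⟨h_neg, h_one⟩ : -1 < x / a ∧ x / a < 1 := by
    rwa [← abs_lt, abs_div, abs_of_pos ha, div_lt_one ha]
  have h_scale : √(a ^ 2 - x ^ 2) = a * √(1 - (x / a) ^ 2) := by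
    rw [show a ^ 2 - x ^ 2 = a ^ 2 * (1 - (x / a) ^ 2) by field_simp,
      sqrt_mul (sq_nonneg a), sqrt_sq ha.le]
  refine ((hasDerivAt_arcsin h_neg.ne' h_one.ne).comp x
    ((hasDerivAt_id x).div_const a)).congr_deriv ?_
  rw [h_scale, div_mul_div_comm, one_mul, mul_comm]

lemma hasDerivAt_antideriv_sq_mul_sqrt_sq_sub_sq (hx : |x| < a) :
    HasDerivAt (fun y ↦ (a ^ 4 * arcsin (y / a) - (a ^ 2 * y - 2 * y ^ 3) * √(a ^ 2 - y ^ 2)) / 8)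
      (x ^ 2 * √(a ^ 2 - x ^ 2)) x := by
  have h_pos := sq_sub_sq_pos_of_abs_lt hx
  have h_sq := sq_sqrt h_pos.le
  have h_poly : HasDerivAt (fun y ↦ a ^ 2 * y - 2 * y ^ 3) (a ^ 2 - 6 * x ^ 2) x :=
    (((hasDerivAt_id x).const_mul (a ^ 2)).sub ((hasDerivAt_pow 3 x).const_mul 2)).congr_deriv
      (by norm_num; ring)
  refine ((((hasDerivAt_arcsin_div hx).const_mul (a ^ 4)).sub (h_poly.mul
    (hasDerivAt_sqrt_sq_sub_sq (sub_pos.mp h_pos).ne))).div_const 8).congr_deriv ?_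
  have h_sqrt := sqrt_pos.mpr h_pos
  generalize √(a ^ 2 - x ^ 2) = s at *
  field_simp
  linear_combination (-a ^ 2 - 2 * x ^ 2) * h_sq

theorem integral_sq_mul_sqrt_sq_sub_sq {c : ℝ} (hc : |c| ≤ a) :
    ∫ y in 0..c, y ^ 2 * √(a ^ 2 - y ^ 2) =
      (a ^ 4 * arcsin (c / a) - (a ^ 2 * c - 2 * c ^ 3) * √(a ^ 2 - c ^ 2)) / 8 := by
  rw [intervalIntegral.integral_eq_sub_of_hasDeriv_right (by fun_prop)
    (fun y hy ↦ (hasDerivAt_antideriv_sq_mul_sqrt_sq_sub_sq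
      ((abs_lt_abs_of_mem_uIoo_zero hy).trans_le hc)).hasDerivWithinAt)
    (Continuous.intervalIntegrable (by fun_prop) _ _)]
  simp

end SemicircleCalculus

section LensArea

variable {R γ : ℝ}

/-- The area `A_s(γ)` of the lens in which two discs of radius `R` at distance `γ` meet, given by
its closed form, which is meaningful for `0 ≤ γ ≤ 2R`. -/
noncomputable def lensArea (R γ : ℝ) : ℝ :=
  2 * R ^ 2 * arccos (γ / (2 * R)) - γ * √(R ^ 2 - γ ^ 2 / 4)

lemma continuous_lensArea (R : ℝ) : Continuous (lensArea R) := by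
  unfold lensArea
  fun_prop

lemma lensArea_eq_arcsin (R γ : ℝ) :
    lensArea R γ =
      2 * R ^ 2 * (π / 2 - arcsin (γ / (2 * R))) - γ * (√((2 * R) ^ 2 - γ ^ 2) / 2) := by
  have h_half_chord : √(R ^ 2 - γ ^ 2 / 4) = √((2 * R) ^ 2 - γ ^ 2) / 2 := by
    rw [show R ^ 2 - γ ^ 2 / 4 = ((2 * R) ^ 2 - γ ^ 2) / 2 ^ 2 by ring,
      sqrt_div' _ (by norm_num), sqrt_sq (by norm_num)]
  rw [lensArea, h_half_chord, arccos_eq_pi_div_two_sub_arcsin]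

theorem hasDerivAt_lensArea (hγ : |γ| < 2 * R) :
    HasDerivAt (lensArea R) (-√((2 * R) ^ 2 - γ ^ 2)) γ := by
  have h_pos := sq_sub_sq_pos_of_abs_lt hγ
  have h_sq := sq_sqrt h_pos.le
  rw [funext (lensArea_eq_arcsin R)]
  refine ((((hasDerivAt_arcsin_div hγ).const_sub (π / 2)).const_mul (2 * R ^ 2)).sub
    ((hasDerivAt_id γ).mul ((hasDerivAt_sqrt_sq_sub_sq
      (sub_pos.mp h_pos).ne).div_const 2))).congr_deriv ?_
  have h_sqrt := sqrt_pos.mpr h_pos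
  simp only [id]
  generalize √((2 * R) ^ 2 - γ ^ 2) = s at *
  field_simp
  linear_combination h_sq

theorem integral_const_sub_lensArea_mul (C : ℝ) {c : ℝ} (hc : |c| ≤ 2 * R) :
    ∫ r in 0..c, (C - lensArea R r) * (2 * r) =
      (C - lensArea R c) * c ^ 2 - ∫ r in 0..c, r ^ 2 * √((2 * R) ^ 2 - r ^ 2) := by
  have h_cont := continuous_lensArea R
  have h_lens (r : ℝ) (hr : r ∈ uIoo 0 c) :
      HasDerivAt (fun y ↦ C - lensArea R y) (√((2 * R) ^ 2 - r ^ 2)) r :=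
    ((hasDerivAt_lensArea ((abs_lt_abs_of_mem_uIoo_zero hr).trans_le hc)).const_sub C).congr_deriv
      (neg_neg _)
  have h_sq (r : ℝ) (_ : r ∈ uIoo 0 c) : HasDerivAt (fun y : ℝ ↦ y ^ 2) (2 * r) r := by
    simpa using hasDerivAt_pow 2 r
  rw [intervalIntegral.integral_mul_deriv_eq_deriv_mul_of_hasDerivAt
    (by fun_prop) (by fun_prop) h_lens h_sq
    (Continuous.intervalIntegrable (by fun_prop) _ _)
    (Continuous.intervalIntegrable (by fun_prop) _ _)]
  simp [mul_comm]

end LensArea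

section EqualRadiusAndDistance

variable {R : ℝ}

lemma arcsin_one_half : arcsin (1 / 2) = π / 6 :=
  arcsin_eq_of_sin_eq sin_pi_div_six ⟨by linarith [pi_pos], by linarith [pi_pos]⟩

lemma sqrt_two_mul_sq_sub_sq (hR : 0 ≤ R) : √((2 * R) ^ 2 - R ^ 2) = √3 * R := by
  rw [show (2 * R) ^ 2 - R ^ 2 = 3 * R ^ 2 by ring, sqrt_mul (by norm_num), sqrt_sq hR]

lemma lensArea_self (hR : 0 < R) : lensArea R R = (2 * π / 3 - √3 / 2) * R ^ 2 := by
  rw [lensArea_eq_arcsin, sqrt_two_mul_sq_sub_sq hR.le,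
    show R / (2 * R) = 1 / 2 by field_simp, arcsin_one_half]
  ring

lemma integral_sq_mul_chord (hR : 0 < R) :
    ∫ r in 0..R, r ^ 2 * √((2 * R) ^ 2 - r ^ 2) = (π / 3 - √3 / 4) * R ^ 4 := by
  rw [integral_sq_mul_sqrt_sq_sub_sq (by rw [abs_of_pos hR]; linarith),
    sqrt_two_mul_sq_sub_sq hR.le, show R / (2 * R) = 1 / 2 by field_simp, arcsin_one_half]
  ring

end EqualRadiusAndDistance

/-- Lemma 2(a) of the paper (exact form): with
`A_s(γ) = 2R² arccos (γ/(2R)) − γ √(R² − γ²/4)`,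
`∫₀^R (πR² − A_s(r)) (2r/R²) dr = (3√3/4) R²`. -/
theorem stmt_3 (R : ℝ) (hR : 0 < R) :
    ∫ r in (0:ℝ)..R,
        (Real.pi * R ^ 2 -
          (2 * R ^ 2 * Real.arccos (r / (2 * R)) - r * Real.sqrt (R ^ 2 - r ^ 2 / 4))) *
        (2 * r / R ^ 2) =
      3 * Real.sqrt 3 / 4 * R ^ 2 := by
  have hR_le : |R| ≤ 2 * R := by rw [abs_of_pos hR]; linarith
  calc
    _ = (∫ r in 0..R, (π * R ^ 2 - lensArea R r) * (2 * r)) / R ^ 2 := by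
      simp only [← intervalIntegral.integral_div, mul_div_assoc, lensArea]
    _ = ((π * R ^ 2 - (2 * π / 3 - √3 / 2) * R ^ 2) * R ^ 2
          - (π / 3 - √3 / 4) * R ^ 4) / R ^ 2 := by
      rw [integral_const_sub_lensArea_mul _ hR_le, lensArea_self hR, integral_sq_mul_chord hR]
    _ = 3 * √3 / 4 * R ^ 2 := by
      field_simp
      ring
end

section
/- Let T_d > 0, λ > 0, and 0 < Δt < T_d. Let T be uniformly distributed on [0, T_d] and S be exponentially distributed with rate λ, with T and S independent. Then Pr[T > Δt ∨ (T ≤ Δt ∧ T + S > Δt)] = 1 − Δt/T_d + (1 − e^{−λΔt})/(λ T_d). (This is Proposition 1: if a node is on a data channel at time t₁, its switch time to the control channel is uniform in the next T_d seconds, and after switching it starts transmitting after an Exp(λ_c)-distributed silent period, then the probability that it does not introduce interference to the control channel during [t₁, t₁+Δt] equals 1 − Δt/T_d + (1 − e^{−λ_c Δt})/(λ_c T_d).) -/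
open MeasureTheory ProbabilityTheory

/-!
Since `S ≥ 0` almost surely, the event `T > Δt ∨ (T ≤ Δt ∧ T + S > Δt)` is, up to a null set, just
`T + S > Δt`. The cdf at `d` of the sum of a uniform variable on `[a, b]` and an independent
variable with law `ν` is the average of the cdf of `ν` over the window `[d - b, d - a]`. Here the
window is `[Δt - T_d, Δt]`; the exponential cdf vanishes on its negative part, and on `[0, Δt]` it
integrates to `Δt - (1 - e^{-λΔt}) / λ`.
-/

theorem cdf_conv (μ ν : Measure ℝ) [IsProbabilityMeasure μ] [IsProbabilityMeasure ν] (d : ℝ) :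
    cdf (μ ∗ ν) d = ∫ x, cdf ν (d - x) ∂μ := by
  have hint : Integrable ((Set.Iic d).indicator (1 : ℝ → ℝ)) (μ ∗ ν) :=
    (integrable_const 1).indicator measurableSet_Iic
  rw [cdf_eq_real, ← integral_indicator_one measurableSet_Iic, integral_conv hint]
  refine integral_congr_ae (.of_forall fun x ↦ ?_)
  have hshift : (fun y ↦ (Set.Iic d).indicator (1 : ℝ → ℝ) (x + y)) =
      (Set.Iic (d - x)).indicator 1 := by
    ext y
    simp only [Set.indicator_apply, Set.mem_Iic, le_sub_iff_add_le', Pi.one_apply]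
  simp only [hshift, integral_indicator_one measurableSet_Iic, cdf_eq_real]

theorem integral_cond_Icc {E : Type*} [NormedAddCommGroup E] [NormedSpace ℝ E] {a b : ℝ}
    (hab : a ≤ b) (f : ℝ → E) :
    ∫ x, f x ∂volume[|Set.Icc a b] = (b - a)⁻¹ • ∫ x in a..b, f x := by
  rw [ProbabilityTheory.cond, ← setAverage_eq', ← setAverage_congr Ioc_ae_eq_Icc,
    ← Set.uIoc_of_le hab, interval_average_eq]

theorem cdf_cond_Icc_conv {a b : ℝ} (hab : a < b) (ν : Measure ℝ) [IsProbabilityMeasure ν]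
    (d : ℝ) :
    cdf (volume[|Set.Icc a b] ∗ ν) d = (b - a)⁻¹ * ∫ x in (d - b)..(d - a), cdf ν x := by
  have : IsProbabilityMeasure (volume[|Set.Icc a b]) :=
    cond_isProbabilityMeasure_of_finite (by simpa using hab) (by simp)
  rw [cdf_conv, integral_cond_Icc hab.le, smul_eq_mul,
    intervalIntegral.integral_comp_sub_left (fun x ↦ cdf ν x)]

theorem integral_one_sub_exp_neg_mul {r : ℝ} (hr : r ≠ 0) (d : ℝ) :
    ∫ x in 0..d, (1 - Real.exp (-(r * x))) = d - (1 - Real.exp (-(r * d))) / r := by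
  have hderiv (x : ℝ) :
      HasDerivAt (fun x ↦ x - -Real.exp (-(r * x)) / r) (1 - Real.exp (-(r * x))) x := by
    have h := (hasDerivAt_id x).sub ((hasDerivAt_neg_exp_mul_exp (r := r) (x := x)).div_const r)
    rwa [mul_div_cancel_left₀ _ hr] at h
  rw [intervalIntegral.integral_eq_sub_of_hasDerivAt (fun x _ ↦ hderiv x)
    (Continuous.intervalIntegrable (by fun_prop) _ _)]
  simp only [mul_zero, neg_zero, Real.exp_zero]
  ring

theorem integral_cdf_expMeasure {r c d : ℝ} (hr : 0 < r) (hc : c ≤ 0) (hd : 0 ≤ d) :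
    ∫ x in c..d, cdf (expMeasure r) x = d - (1 - Real.exp (-(r * d))) / r := by
  have hint (u v : ℝ) : IntervalIntegrable (cdf (expMeasure r)) volume u v :=
    (monotone_cdf _).intervalIntegrable
  have hneg : ∫ x in c..0, cdf (expMeasure r) x = 0 := by
    refine intervalIntegral.integral_zero_ae (Filter.Eventually.of_forall fun x hx ↦ ?_)
    rw [Set.uIoc_of_le hc] at hx
    rcases hx.2.lt_or_eq with hx0 | rfl
    · rw [cdf_expMeasure_eq hr, if_neg hx0.not_ge]
    · simp [cdf_expMeasure_eq hr]
  have hpos : ∫ x in 0..d, cdf (expMeasure r) x = ∫ x in 0..d, (1 - Real.exp (-(r * x))) := by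
    refine intervalIntegral.integral_congr fun x hx ↦ ?_
    rw [Set.uIcc_of_le hd] at hx
    simp only [cdf_expMeasure_eq hr, if_pos hx.1]
  rw [← intervalIntegral.integral_add_adjacent_intervals (hint c 0) (hint 0 d), hneg, hpos,
    zero_add, integral_one_sub_exp_neg_mul hr.ne']

theorem ae_nonneg_gammaMeasure (a r : ℝ) : ∀ᵐ x ∂gammaMeasure a r, 0 ≤ x := by
  have hmeas : Measurable (gammaPDF a r) := (measurable_gammaPDFReal a r).ennreal_ofReal
  rw [gammaMeasure, ae_withDensity_iff hmeas]
  refine .of_forall fun x hx ↦ ?_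
  contrapose! hx
  exact gammaPDF_of_neg hx

theorem setOf_lt_or_le_and_lt_add_ae_eq {Ω M : Type*} [MeasurableSpace Ω] {P : Measure Ω}
    [AddZeroClass M] [LinearOrder M] [AddLeftMono M] {X Y : Ω → M}
    (hY : ∀ᵐ ω ∂P, 0 ≤ Y ω) (d : M) :
    {ω | d < X ω ∨ (X ω ≤ d ∧ d < X ω + Y ω)} =ᵐ[P] {ω | d < X ω + Y ω} := by
  filter_upwards [hY] with ω hω
  refine propext ⟨?_, fun hlt ↦ (lt_or_ge d (X ω)).imp_right fun hle ↦ ⟨hle, hlt⟩⟩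
  rintro (hX | ⟨-, hlt⟩)
  · exact lt_add_of_lt_of_nonneg hX hω
  · exact hlt

theorem measureReal_lt_add_of_indepFun {Ω : Type*} [MeasurableSpace Ω] {P : Measure Ω}
    [IsProbabilityMeasure P] {X Y : Ω → ℝ} (hX : AEMeasurable X P)
    (hY : AEMeasurable Y P) (hXY : IndepFun X Y P) (d : ℝ) :
    P.real {ω | d < X ω + Y ω} = 1 - cdf (P.map X ∗ P.map Y) d := by
  have : IsProbabilityMeasure (P.map (X + Y)) := Measure.isProbabilityMeasure_map (hX.add hY)
  rw [← hXY.map_add_eq_map_conv_map₀ hX hY, cdf_eq_real,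
    ← probReal_compl_eq_one_sub measurableSet_Iic, Set.compl_Iic,
    map_measureReal_apply_of_aemeasurable (hX.add hY) measurableSet_Ioi]
  rfl

/-- Proposition 1 of the paper: if `T ~ Uniform[0, T_d]` and `S ~ Exp(λ)` are
independent, `0 < Δt < T_d`, then
`Pr[T > Δt ∨ (T ≤ Δt ∧ T + S > Δt)] = 1 − Δt/T_d + (1 − e^{−λΔt})/(λ T_d)`. -/
theorem stmt_6 (T_d lam Δt : ℝ) (hTd : 0 < T_d) (hlam : 0 < lam)
    (hΔ0 : 0 < Δt) (hΔ : Δt < T_d)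
    {Ω : Type*} [MeasurableSpace Ω] (P : Measure Ω) [IsProbabilityMeasure P]
    (T S : Ω → ℝ) (hTmeas : Measurable T) (hSmeas : Measurable S)
    (hT : pdf.IsUniform T (Set.Icc 0 T_d) P)
    (hS : Measure.map S P = expMeasure lam)
    (hTS : IndepFun T S P) :
    P {ω | T ω > Δt ∨ (T ω ≤ Δt ∧ T ω + S ω > Δt)} =
      ENNReal.ofReal (1 - Δt / T_d + (1 - Real.exp (-lam * Δt)) / (lam * T_d)) := by
  have : IsProbabilityMeasure (expMeasure lam) := isProbabilityMeasure_expMeasure hlam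
  have hS_nonneg : ∀ᵐ ω ∂P, 0 ≤ S ω :=
    ae_of_ae_map hSmeas.aemeasurable (hS ▸ ae_nonneg_gammaMeasure 1 lam)
  have hcdf : cdf (P.map T ∗ P.map S) Δt =
      T_d⁻¹ * (Δt - (1 - Real.exp (-(lam * Δt))) / lam) := by
    rw [hT, hS, cdf_cond_Icc_conv hTd, sub_zero, sub_zero,
      integral_cdf_expMeasure hlam (sub_nonpos.2 hΔ.le) hΔ0.le]
  calc P {ω | T ω > Δt ∨ (T ω ≤ Δt ∧ T ω + S ω > Δt)}
    _ = P {ω | Δt < T ω + S ω} := measure_congr (setOf_lt_or_le_and_lt_add_ae_eq hS_nonneg Δt)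
    _ = ENNReal.ofReal (1 - cdf (P.map T ∗ P.map S) Δt) := by
      rw [← measureReal_lt_add_of_indepFun hTmeas.aemeasurable hSmeas.aemeasurable hTS,
        ofReal_measureReal]
    _ = ENNReal.ofReal (1 - Δt / T_d + (1 - Real.exp (-lam * Δt)) / (lam * T_d)) := by
      rw [hcdf, neg_mul]
      congr 1
      field_simp
      ring
end
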